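/- arXiv:0905.1099 — 2 statements merged into one kernel-verified Lean document; each statement's English description precedes it below -/
import Mathlib

section
/- Let T₁ = λn((n)δ)G where δ = λf(f)0̲ and G = λxλy(x)λz(y)(s̲)z, with s̲ = λnλxλf((n)(f)x)f the successor term. Then for every n ∈ ℕ and every λ-term θₙ ≃β n̲, one has (T₁)θₙ f ≻ (f)(s̲)ⁿ0̲ (f a fresh variable); consequently T₁ is a storage operator for Church integers. -/
/- Pure untyped λ-calculus with de Bruijn indices. -/

inductive Lam : Type
  | var : ℕ → Lam
  | app : Lam → Lam → Lam
  | abs : Lam → Lam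
  deriving DecidableEq

namespace Lam

/-- Renaming of free variables. -/
def rename (ρ : ℕ → ℕ) : Lam → Lam
  | var i => var (ρ i)
  | app u v => app (u.rename ρ) (v.rename ρ)
  | abs u => abs (u.rename (fun i => match i with | 0 => 0 | j+1 => ρ j + 1))

/-- Lifting of a simultaneous substitution under a binder. -/
def liftSub (σ : ℕ → Lam) : ℕ → Lam
  | 0 => var 0
  | i+1 => (σ i).rename (· + 1)

/-- Simultaneous (capture-avoiding) substitution of the free variables. -/
def subst (σ : ℕ → Lam) : Lam → Lam
  | var i => σ i
  | app u v => app (u.subst σ) (v.subst σ)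
  | abs u => abs (u.subst (liftSub σ))

/-- `u.subst0 v` is `u[v/x]` for the first variable. -/
def subst0 (u v : Lam) : Lam :=
  u.subst (fun i => match i with | 0 => v | j+1 => var j)

/-- One step of β-reduction (anywhere in the term). -/
inductive Beta : Lam → Lam → Prop
  | beta (u v : Lam) : Beta (app (abs u) v) (u.subst0 v)
  | appL {u u'} (v) : Beta u u' → Beta (app u v) (app u' v)
  | appR (u) {v v'} : Beta v v' → Beta (app u v) (app u v')
  | abs {u u'} : Beta u u' → Beta (abs u) (abs u')

/-- β-equivalence `≃β`. -/
def BetaEq : Lam → Lam → Prop := Relation.EqvGen Beta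

/-- A term is normal if it has no β-redex. -/
def Normal (t : Lam) : Prop := ∀ u, ¬ Beta t u

def IsAbs : Lam → Prop
  | abs _ => True
  | _ => False

/-- One step of head reduction: reduction of the head redex. -/
inductive HeadStep : Lam → Lam → Prop
  | beta (u v) : HeadStep (app (abs u) v) (u.subst0 v)
  | appL {u u'} (v) : ¬ u.IsAbs → HeadStep u u' → HeadStep (app u v) (app u' v)
  | abs {u u'} : HeadStep u u' → HeadStep (abs u) (abs u')

/-- `HeadRedN n u v` : `u` head-reduces to `v` in exactly `n` steps (`u ≻ v` with `n(u,v) = n`). -/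
inductive HeadRedN : ℕ → Lam → Lam → Prop
  | refl (u) : HeadRedN 0 u u
  | step {n u v w} : HeadStep u v → HeadRedN n v w → HeadRedN (n+1) u w

/-- `u ≻ v` : `v` is obtained from `u` by some head reductions. -/
def HeadRed (u v : Lam) : Prop := ∃ n, HeadRedN n u v

/-- Head normal form. -/
def HeadNF (t : Lam) : Prop := ∀ u, ¬ HeadStep t u

def ClosedUnder : ℕ → Lam → Prop
  | k, var i => i < k
  | k, app u v => ClosedUnder k u ∧ ClosedUnder k v
  | k, abs u => ClosedUnder (k+1) u

/-- Closed λ-term. -/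
def Closed (t : Lam) : Prop := ClosedUnder 0 t

/-- `(f)ⁿx` : `iterApp f n x = (f)(f)…(f)x`. -/
def iterApp (f : Lam) : ℕ → Lam → Lam
  | 0, x => x
  | n+1, x => app f (iterApp f n x)

/-- The Church integer `n̲ = λxλf(f)ⁿx`. -/
def church (n : ℕ) : Lam := abs (abs (iterApp (var 0) n (var 1)))

/-- `(t)w₁…wₖ`. -/
def appList (t : Lam) (ws : List Lam) : Lam := ws.foldl app t

/-- `T` is a storage operator for the closed normal term `t` :
there is `τ ≃β t` such that for every `θ ≃β t` there is a substitution `σ`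
(not touching the fresh variable `f`, represented by the de Bruijn index `0`)
with `(T)θf ≻ (f)σ(τ)`. -/
def IsStorageFor (T t : Lam) : Prop :=
  Closed T ∧ ∃ τ, BetaEq τ t ∧ ∀ θ, BetaEq θ t →
    ∃ σ : ℕ → Lam, σ 0 = var 0 ∧
      HeadRed (app (app T θ) (var 0)) (app (var 0) (τ.subst σ))

end Lam

namespace Lam

/-- `0̲ = λxλf x` is `church 0`; `δ = λf(f)0̲`. -/
def deltaOp : Lam := abs (app (var 0) (church 0))

/-- `s̲ = λnλxλf((n)(f)x)f`, the successor term. -/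
def succL : Lam := abs (abs (abs (app (app (var 2) (app (var 0) (var 1))) (var 0))))

/-- `G = λxλy(x)λz(y)(s̲)z`. -/
def GOp : Lam := abs (abs (app (var 1) (abs (app (var 1) (app succL (var 0))))))

/-- `T₁ = λn((n)δ)G`. -/
def T1 : Lam := abs (app (app (var 0) deltaOp) GOp)

end Lam

/-!
Terms are interpreted in Engeler's graph model, whose elements are read as intersection types;
β-equivalent terms have the same denotation because denotations are monotone and finitary in the
environment. Reading each type as a set of terms closed under weak head expansion, every term
realizes all the types that it has in the empty environment. With the natural numbers as atoms,
`church n` has the type `0 → (0 → 1) ∩ ⋯ ∩ (n - 1 → n) → n`, hence so does every `θ ≃β church n`,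
even if `θ` is not closed. Interpret the atom `i` as the set of terms `t` such that `(t) y` weak
head reduces to `(y) (s̲)ⁱ 0̲` for every `y`: then `δ` realizes `0` and `G` realizes each
`i → i + 1`, so `(θ) δ G` realizes `n`.
-/

namespace Lam

/-! ### Substitution algebra -/

/-- The sequence `x, ρ 0, ρ 1, …`. It extends a substitution or an environment to a
context with one more variable, which has de Bruijn index `0`. -/
def scons {α : Type*} (x : α) (ρ : ℕ → α) : ℕ → α
  | 0 => x
  | i + 1 => ρ i

theorem scons_mono {α : Type*} [Preorder α] {x y : α} {ρ ρ' : ℕ → α} (hx : x ≤ y) (hρ : ρ ≤ ρ') :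
    scons x ρ ≤ scons y ρ'
  | 0 => hx
  | i + 1 => hρ i

theorem rename_rename (u : Lam) (f g : ℕ → ℕ) : (u.rename f).rename g = u.rename (g ∘ f) := by
  induction u generalizing f g with
  | var i => rfl
  | app u v ihu ihv => simp only [rename, ihu, ihv]
  | abs u ih =>
    simp only [rename, ih]
    congr 2
    funext i
    cases i <;> rfl

theorem rename_subst (u : Lam) (f : ℕ → ℕ) (σ : ℕ → Lam) :
    (u.rename f).subst σ = u.subst (σ ∘ f) := by
  induction u generalizing f σ with
  | var i => rfl
  | app u v ihu ihv => simp only [rename, subst, ihu, ihv]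
  | abs u ih =>
    simp only [rename, subst, ih]
    congr 2
    funext i
    cases i <;> rfl

theorem subst_rename (u : Lam) (σ : ℕ → Lam) (f : ℕ → ℕ) :
    (u.subst σ).rename f = u.subst (fun i => (σ i).rename f) := by
  induction u generalizing σ f with
  | var i => rfl
  | app u v ihu ihv => simp only [rename, subst, ihu, ihv]
  | abs u ih =>
    simp only [rename, subst, ih]
    congr 2
    funext i
    cases i with
    | zero => rfl
    | succ i => simp only [liftSub, rename_rename]; rfl

theorem subst_subst (u : Lam) (σ τ : ℕ → Lam) :
    (u.subst σ).subst τ = u.subst (fun i => (σ i).subst τ) := by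
  induction u generalizing σ τ with
  | var i => rfl
  | app u v ihu ihv => simp only [subst, ihu, ihv]
  | abs u ih =>
    simp only [subst, ih]
    congr 2
    funext i
    cases i with
    | zero => rfl
    | succ i => simp only [liftSub, rename_subst, subst_rename]; rfl

theorem liftSub_var : liftSub var = var := by
  funext i
  cases i <;> rfl

theorem subst_var (u : Lam) : u.subst var = u := by
  induction u with
  | var i => rfl
  | app u v ihu ihv => simp only [subst, ihu, ihv]
  | abs u ih => simp only [subst, liftSub_var, ih]

theorem rename_succ_subst0 (u v : Lam) : (u.rename (· + 1)).subst0 v = u := by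
  rw [subst0, rename_subst]
  exact subst_var u

theorem subst_liftSub_subst0 (u v : Lam) (σ : ℕ → Lam) :
    (u.subst (liftSub σ)).subst0 v = u.subst (scons v σ) := by
  rw [subst0, subst_subst]
  congr 1
  funext i
  cases i with
  | zero => rfl
  | succ i => exact rename_succ_subst0 (σ i) v

/-! ### The graph model of intersection types -/

/-- Intersection types with atoms in `α`; `arr [b₁, …, bₖ] a` is the type `b₁ ∩ ⋯ ∩ bₖ → a`.
Intersections only occur to the left of an arrow, as lists whose order and multiplicities are
irrelevant. -/
inductive InterType (α : Type*)
  | atom : α → InterType α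
  | arr : List (InterType α) → InterType α → InterType α

open InterType

section Interpretation

variable {α : Type*}

/-- The denotation of a term in the graph model: the set of its intersection types in an
environment which gives the set of types of each free variable. -/
def interp : Lam → (ℕ → Set (InterType α)) → Set (InterType α)
  | var i, ρ => ρ i
  | app u v, ρ => {a | ∃ L, arr L a ∈ interp u ρ ∧ ∀ b ∈ L, b ∈ interp v ρ}
  | abs u, ρ => {a | ∃ L c, a = arr L c ∧ c ∈ interp u (scons {b | b ∈ L} ρ)}

theorem interp_mono (u : Lam) : Monotone (interp (α := α) u) := by
  induction u with
  | var i => exact fun ρ ρ' h => h i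
  | app u v ihu ihv =>
    rintro ρ ρ' h a ⟨L, hu, hv⟩
    exact ⟨L, ihu h hu, fun b hb => ihv h (hv b hb)⟩
  | abs u ih =>
    rintro ρ ρ' h _ ⟨L, c, rfl, hc⟩
    exact ⟨L, c, rfl, ih (scons_mono le_rfl h) hc⟩

theorem exists_finite_env_of_mem_interp (u : Lam) {ρ : ℕ → Set (InterType α)} {a : InterType α}
    (ha : a ∈ interp u ρ) : ∃ r ≤ ρ, (∀ i, (r i).Finite) ∧ a ∈ interp u r := by
  induction u generalizing ρ a with
  | var i =>
    refine ⟨fun j => {b | b = a ∧ j = i}, ?_, fun j => ?_, rfl, rfl⟩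
    · rintro j b ⟨rfl, rfl⟩
      exact ha
    · exact (Set.finite_singleton a).subset fun b hb => hb.1
  | app u v ihu ihv =>
    obtain ⟨L, hu, hv⟩ := ha
    obtain ⟨r, hrρ, hr, hur⟩ := ihu hu
    choose s hsρ hs hvs using fun b hb => ihv (hv b hb)
    refine ⟨fun i => r i ∪ ⋃ b, ⋃ hb : b ∈ L, s b hb i, fun i => ?_, fun i => ?_, L, ?_, ?_⟩
    · exact Set.union_subset (hrρ i) (Set.iUnion₂_subset fun b hb => hsρ b hb i)
    · exact (hr i).union (L.finite_toSet.biUnion' fun b hb => hs b hb i)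
    · exact interp_mono u (fun i => Set.subset_union_left) hur
    · intro b hb
      refine interp_mono v (fun i => ?_) (hvs b hb)
      exact (Set.subset_iUnion₂ (s := fun b hb => s b hb i) b hb).trans Set.subset_union_right
  | abs u ih =>
    obtain ⟨L, c, rfl, hc⟩ := ha
    obtain ⟨r, hrρ, hr, hcr⟩ := ih hc
    refine ⟨fun i => r (i + 1), fun i => hrρ (i + 1), fun i => hr (i + 1), L, c, rfl, ?_⟩
    refine interp_mono u (fun i => ?_) hcr
    cases i with
    | zero => exact hrρ 0
    | succ i => exact le_rfl

theorem interp_rename (u : Lam) (f : ℕ → ℕ) (ρ : ℕ → Set (InterType α)) :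
    interp (u.rename f) ρ = interp u (ρ ∘ f) := by
  induction u generalizing f ρ with
  | var i => rfl
  | app u v ihu ihv => simp only [rename, interp, ihu, ihv]
  | abs u ih =>
    have env_eq (L : List (InterType α)) : scons {b | b ∈ L} ρ ∘
        (fun i => match i with | 0 => 0 | j + 1 => f j + 1) = scons {b | b ∈ L} (ρ ∘ f) := by
      funext i
      cases i <;> rfl
    simp only [rename, interp, ih, env_eq]

theorem interp_subst (u : Lam) (σ : ℕ → Lam) (ρ : ℕ → Set (InterType α)) :
    interp (u.subst σ) ρ = interp u (fun i => interp (σ i) ρ) := by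
  induction u generalizing σ ρ with
  | var i => rfl
  | app u v ihu ihv => simp only [subst, interp, ihu, ihv]
  | abs u ih =>
    have env_eq (L : List (InterType α)) : (fun i => interp (liftSub σ i) (scons {b | b ∈ L} ρ)) =
        scons {b | b ∈ L} (fun i => interp (σ i) ρ) := by
      funext i
      cases i with
      | zero => rfl
      | succ i => exact interp_rename (σ i) (· + 1) _
    simp only [subst, interp, ih, env_eq]

theorem interp_subst0 (u v : Lam) (ρ : ℕ → Set (InterType α)) :
    interp (u.subst0 v) ρ = interp u (scons (interp v ρ) ρ) := by
  rw [subst0, interp_subst]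
  congr 1
  funext i
  cases i <;> rfl

theorem interp_app_abs (u v : Lam) (ρ : ℕ → Set (InterType α)) :
    interp (app (abs u) v) ρ = interp (u.subst0 v) ρ := by
  rw [interp_subst0]
  ext a
  constructor
  · rintro ⟨_, ⟨L, c, ⟨⟩, hc⟩, hv⟩
    exact interp_mono u (scons_mono hv le_rfl) hc
  · intro ha
    obtain ⟨r, hrρ, hr, har⟩ := exists_finite_env_of_mem_interp u ha
    have mem_types {b : InterType α} : b ∈ (hr 0).toFinset.toList ↔ b ∈ r 0 := by simp
    refine ⟨(hr 0).toFinset.toList, ⟨_, a, rfl, interp_mono u (fun i => ?_) har⟩,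
      fun b hb => hrρ 0 (mem_types.1 hb)⟩
    cases i with
    | zero => exact fun b hb => mem_types.2 hb
    | succ i => exact hrρ (i + 1)

theorem Beta.interp_eq {u v : Lam} (h : Beta u v) : interp (α := α) u = interp v := by
  induction h with
  | beta u v => exact funext (interp_app_abs u v)
  | appL _ _ ih | appR _ _ ih | abs _ ih => funext ρ; simp only [interp, ih]

theorem BetaEq.interp_eq {u v : Lam} (h : BetaEq u v) : interp (α := α) u = interp v := by
  induction h with
  | rel _ _ h => exact h.interp_eq
  | refl => rfl
  | symm _ _ _ ih => exact ih.symm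
  | trans _ _ _ _ _ ih₁ ih₂ => exact ih₁.trans ih₂

end Interpretation

/-! ### Weak head reduction and realizability -/

/-- One step of weak head reduction, that is, head reduction outside abstractions. Unlike
`HeadStep`, it is preserved by application to an argument. -/
inductive WeakHeadStep : Lam → Lam → Prop
  | beta (u v) : WeakHeadStep (app (abs u) v) (u.subst0 v)
  | appL {u u'} (v) : WeakHeadStep u u' → WeakHeadStep (app u v) (app u' v)

theorem WeakHeadStep.headStep {u v : Lam} (h : WeakHeadStep u v) : HeadStep u v := by
  induction h with
  | beta u v => exact .beta u v
  | appL v h ih =>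
    refine .appL v ?_ ih
    cases h <;> exact id

/-- Weak head reduction in any number of steps. -/
abbrev WeakHeadRed : Lam → Lam → Prop := Relation.ReflTransGen WeakHeadStep

theorem WeakHeadRed.headRed {u v : Lam} (h : WeakHeadRed u v) : HeadRed u v := by
  induction h using Relation.ReflTransGen.head_induction_on with
  | refl => exact ⟨0, .refl _⟩
  | head h _ ih =>
    obtain ⟨n, hn⟩ := ih
    exact ⟨n + 1, .step h.headStep hn⟩

/-- Saturated sets of terms, the candidates for interpreting types: those closed under weak head
expansion. -/
def Saturated (S : Set Lam) : Prop :=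
  ∀ ⦃t t'⦄, WeakHeadStep t t' → t' ∈ S → t ∈ S

section Realizability

variable {α : Type*} {S : α → Set Lam}

/-- The terms realizing an intersection type, given the realizers `S i` of each atom `i`. -/
def realizers (S : α → Set Lam) : InterType α → Set Lam
  | atom i => S i
  | arr L a => {t | ∀ v, (∀ b, (hb : b ∈ L) → v ∈ realizers S b) → app t v ∈ realizers S a}

theorem saturated_realizers (hS : ∀ i, Saturated (S i)) : ∀ a, Saturated (realizers S a)
  | atom i => by
    rw [realizers]
    exact hS i
  | arr L a => by
    rw [realizers]
    exact fun t t' h ht' v hv => saturated_realizers hS a (h.appL v) (ht' v hv)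

theorem subst_mem_realizers (hS : ∀ i, Saturated (S i)) (u : Lam) {ρ : ℕ → Set (InterType α)}
    {σ : ℕ → Lam} (hσ : ∀ i, ∀ b ∈ ρ i, σ i ∈ realizers S b) {a : InterType α}
    (ha : a ∈ interp u ρ) : u.subst σ ∈ realizers S a := by
  induction u generalizing ρ σ a with
  | var i => exact hσ i a ha
  | app u v ihu ihv =>
    obtain ⟨L, hu, hv⟩ := ha
    have hu' := ihu hσ hu
    rw [realizers] at hu'
    exact hu' _ fun b hb => ihv hσ (hv b hb)
  | abs u ih =>
    obtain ⟨L, c, rfl, hc⟩ := ha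
    rw [realizers]
    intro v hv
    refine saturated_realizers hS c (.beta _ v) ?_
    rw [subst_liftSub_subst0]
    refine ih (fun i b hb => ?_) hc
    cases i with
    | zero => exact hv b hb
    | succ i => exact hσ i b hb

theorem mem_realizers_of_mem_interp_empty (hS : ∀ i, Saturated (S i)) {u : Lam} {a : InterType α}
    (ha : a ∈ interp u fun _ => ∅) : u ∈ realizers S a := by
  rw [← subst_var u]
  exact subst_mem_realizers hS u (fun _ _ hb => hb.elim) ha

end Realizability

/-! ### Church integers as iterators -/

/-- The intersection `(0 → 1) ∩ ⋯ ∩ (n - 1 → n)` of arrows between atoms, as a list. -/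
def stepTypes (n : ℕ) : List (InterType ℕ) :=
  (List.range n).map fun i => arr [atom i] (atom (i + 1))

theorem arr_mem_interp_church (n : ℕ) (ρ : ℕ → Set (InterType ℕ)) :
    arr [atom 0] (arr (stepTypes n) (atom n)) ∈ interp (church n) ρ := by
  refine ⟨_, _, rfl, _, _, rfl, ?_⟩
  suffices ∀ k ≤ n, atom k ∈ interp (iterApp (var 0) k (var 1))
      (scons {b | b ∈ stepTypes n} (scons {b | b ∈ [atom 0]} ρ)) from this n le_rfl
  intro k hk
  induction k with
  | zero => exact List.mem_singleton_self _
  | succ k ih =>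
    refine ⟨[atom k], List.mem_map.2 ⟨k, List.mem_range.2 hk, rfl⟩, fun b hb => ?_⟩
    rw [List.mem_singleton.1 hb]
    exact ih (by lia)

theorem app_app_mem_of_betaEq_church {S : ℕ → Set Lam} (hS : ∀ i, Saturated (S i)) {n : ℕ}
    {θ x g : Lam} (hθ : BetaEq θ (church n)) (hx : x ∈ S 0)
    (hg : ∀ i < n, ∀ t ∈ S i, app g t ∈ S (i + 1)) : app (app θ x) g ∈ S n := by
  have θ_mem : θ ∈ realizers S (arr [atom 0] (arr (stepTypes n) (atom n))) :=
    mem_realizers_of_mem_interp_empty hS (hθ.interp_eq ▸ arr_mem_interp_church n _)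
  simp only [realizers, List.mem_singleton, forall_eq, Set.mem_ofPred_eq] at θ_mem
  refine θ_mem x hx g fun b hb => ?_
  obtain ⟨i, hi, rfl⟩ := List.mem_map.1 hb
  simpa only [realizers, List.mem_singleton, forall_eq, Set.mem_ofPred_eq] using
    hg i (List.mem_range.1 hi)

/-! ### The operator `T1` -/

/-- The terms `t` which, like `λy(y)w`, pass `w` to any argument `y`: `(t)y ≻ (y)w`. -/
def feeders (w : Lam) : Set Lam :=
  {t | ∀ y, WeakHeadRed (app t y) (app y w)}

theorem saturated_feeders (w : Lam) : Saturated (feeders w) :=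
  fun _ _ h ht y => (ht y).head (h.appL y)

theorem deltaOp_mem_feeders : deltaOp ∈ feeders (church 0) :=
  fun y => .single (.beta (app (var 0) (church 0)) y)

theorem app_GOp_mem_feeders {t w : Lam} (ht : t ∈ feeders w) :
    app GOp t ∈ feeders (app succL w) := by
  intro y
  let k := abs (app (y.rename (· + 1)) (app succL (var 0)))
  let body := app (t.rename (· + 1)) (abs (app (var 1) (app succL (var 0))))
  have bind_t : WeakHeadStep (app GOp t) (abs body) := .beta _ t
  have bind_y : WeakHeadStep (app (abs body) y) (app t k) := by
    have body_subst0 : body.subst0 y = app t k := congrArg (app · k) (rename_succ_subst0 t y)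
    exact body_subst0 ▸ .beta body y
  have k_app : WeakHeadStep (app k w) (app y (app succL w)) := by
    have k_subst0 : (app (y.rename (· + 1)) (app succL (var 0))).subst0 w = app y (app succL w) :=
      congrArg (app · (app succL w)) (rename_succ_subst0 y w)
    exact k_subst0 ▸ .beta _ w
  exact .head (bind_t.appL y) (.head bind_y ((ht k).tail k_app))

theorem weakHeadRed_T1 {n : ℕ} {θ : Lam} (hθ : BetaEq θ (church n)) (y : Lam) :
    WeakHeadRed (app (app T1 θ) y) (app y (iterApp succL n (church 0))) := by
  have unfold_T1 : WeakHeadStep (app T1 θ) (app (app θ deltaOp) GOp) := .beta _ θ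
  have θ_mem : app (app θ deltaOp) GOp ∈ feeders (iterApp succL n (church 0)) :=
    app_app_mem_of_betaEq_church (S := fun i => feeders (iterApp succL i (church 0)))
      (fun _ => saturated_feeders _) hθ deltaOp_mem_feeders fun _ _ _ => app_GOp_mem_feeders
  exact (θ_mem y).head (unfold_T1.appL y)

theorem closed_T1 : Closed T1 := by
  simp [Closed, T1, ClosedUnder, deltaOp, GOp, succL, church, iterApp]

/-! ### The successor term -/

theorem BetaEq.app_right (u : Lam) {v w : Lam} (h : BetaEq v w) : BetaEq (app u v) (app u w) := by
  induction h with
  | rel _ _ h => exact .rel _ _ (.appR u h)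
  | refl => exact .refl _
  | symm _ _ _ ih => exact .symm _ _ ih
  | trans _ _ _ _ _ ih₁ ih₂ => exact .trans _ _ _ ih₁ ih₂

theorem iterApp_subst (f x : Lam) (σ : ℕ → Lam) (n : ℕ) :
    (iterApp f n x).subst σ = iterApp (f.subst σ) n (x.subst σ) := by
  induction n with
  | zero => rfl
  | succ n ih => simp only [iterApp, subst, ih]

theorem iterApp_rename (f x : Lam) (ρ : ℕ → ℕ) (n : ℕ) :
    (iterApp f n x).rename ρ = iterApp (f.rename ρ) n (x.rename ρ) := by
  induction n with
  | zero => rfl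
  | succ n ih => simp only [iterApp, rename, ih]

theorem iterApp_app_self (f x : Lam) (n : ℕ) : iterApp f n (app f x) = iterApp f (n + 1) x := by
  induction n with
  | zero => rfl
  | succ n ih => simp only [iterApp, ih]

theorem church_rename (n : ℕ) (ρ : ℕ → ℕ) : (church n).rename ρ = church n := by
  simp only [church, rename, iterApp_rename]

theorem app_succL_church_betaEq (n : ℕ) : BetaEq (app succL (church n)) (church (n + 1)) := by
  have unfold_succL : Beta (app succL (church n))
      (abs (abs (app (app (church n) (app (var 0) (var 1))) (var 0)))) := by
    have h := Beta.beta (abs (abs (app (app (var 2) (app (var 0) (var 1))) (var 0)))) (church n)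
    simp only [subst0, subst, liftSub, rename, church_rename] at h
    exact h
  have bind_base : Beta (app (church n) (app (var 0) (var 1)))
      (abs (iterApp (var 0) n (app (var 1) (var 2)))) := by
    have h := Beta.beta (abs (iterApp (var 0) n (var 1))) (app (var 0) (var 1))
    simp only [subst0, subst, liftSub, rename, iterApp_subst] at h
    exact h
  have bind_step : Beta (app (abs (iterApp (var 0) n (app (var 1) (var 2)))) (var 0))
      (iterApp (var 0) (n + 1) (var 1)) := by
    have h := Beta.beta (iterApp (var 0) n (app (var 1) (var 2))) (var 0)
    simp only [subst0, subst, iterApp_subst, iterApp_app_self] at h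
    exact h
  exact .trans _ _ _ (.rel _ _ unfold_succL) <|
    .trans _ _ _ (.rel _ _ (.abs (.abs (.appL _ bind_base)))) (.rel _ _ (.abs (.abs bind_step)))

theorem iterApp_succL_betaEq_church (n : ℕ) : BetaEq (iterApp succL n (church 0)) (church n) := by
  induction n with
  | zero => exact .refl _
  | succ n ih => exact .trans _ _ _ (ih.app_right succL) (app_succL_church_betaEq n)

end Lam

open Lam in
theorem stmt3 :
    (∀ (n : ℕ) (θ : Lam), BetaEq θ (church n) →
       HeadRed (app (app T1 θ) (var 0)) (app (var 0) (iterApp succL n (church 0)))) ∧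
    (∀ n : ℕ, IsStorageFor T1 (church n)) := by
  have headRed_T1 (n : ℕ) (θ : Lam) (hθ : BetaEq θ (church n)) :
      HeadRed (app (app T1 θ) (var 0)) (app (var 0) (iterApp succL n (church 0))) :=
    (weakHeadRed_T1 hθ (var 0)).headRed
  refine ⟨headRed_T1, fun n => ⟨closed_T1, _, iterApp_succL_betaEq_church n, fun θ hθ => ?_⟩⟩
  refine ⟨var, rfl, ?_⟩
  rw [subst_var]
  exact headRed_T1 n θ hθ
end

section
/- Church integers do not have strong storage operators: there is no closed λ-term T such that for every n ∈ ℕ and every λ-term θₙ ≃β n̲, (T)θₙ f ≻ (f)n̲ (f a fresh variable). -/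
/-!
A step of head reduction whose source is not an abstraction only moves existing subterms around and
substitutes into them. A closed term none of whose proper subterms is closed cannot be assembled by
substitution: if an occurrence of it in `t.subst σ` involved both `t` and `σ`, the part coming from
`σ` would be a closed proper subterm. So if `(T)θf ≻ (f)s` for such an `s`, then `s` already occurs
verbatim in `T` or in `θ`. Church integers are of this kind; `n̲` is too large to occur in `T` once
`n` is at least the size of `T`, and the redex in `θ = λx((λy y)λf(f)ⁿx) ≃β n̲` prevents it from
occurring in `θ`.
-/

namespace Lam

variable {s t u v : Lam} {k l n : ℕ} {ρ : ℕ → ℕ} {σ : ℕ → Lam}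

theorem closedUnder_of_closedUnder_rename (hρ : ∀ i, ρ i < l → i < k)
    (h : ClosedUnder l (t.rename ρ)) : ClosedUnder k t := by
  induction t generalizing k l ρ with
  | var i => exact hρ i h
  | app u v ihu ihv => exact ⟨ihu hρ h.1, ihv hρ h.2⟩
  | abs u ih =>
    refine ih (fun i hi => ?_) h
    cases i with
    | zero => exact k.succ_pos
    | succ i => exact Nat.succ_lt_succ (hρ i (Nat.lt_of_succ_lt_succ hi))

theorem closed_of_closed_rename (h : Closed (t.rename ρ)) : Closed t :=
  closedUnder_of_closedUnder_rename (fun _ hi => absurd hi (Nat.not_lt_zero _)) h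

theorem rename_eq_self_of_closedUnder (hρ : ∀ i < k, ρ i = i) (h : ClosedUnder k t) :
    t.rename ρ = t := by
  induction t generalizing k ρ with
  | var i => exact congrArg var (hρ i h)
  | app u v ihu ihv => exact congrArg₂ app (ihu hρ h.1) (ihv hρ h.2)
  | abs u ih =>
    refine congrArg abs (ih (fun i hi => ?_) h)
    cases i with
    | zero => rfl
    | succ i => exact congrArg (· + 1) (hρ i (Nat.lt_of_succ_lt_succ hi))

theorem Closed.rename_eq_self (h : Closed t) : t.rename ρ = t :=
  rename_eq_self_of_closedUnder (fun _ hi => absurd hi (Nat.not_lt_zero _)) h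

theorem subst_eq_self_of_closedUnder (hσ : ∀ i < k, σ i = var i) (h : ClosedUnder k t) :
    t.subst σ = t := by
  induction t generalizing k σ with
  | var i => exact hσ i h
  | app u v ihu ihv => exact congrArg₂ app (ihu hσ h.1) (ihv hσ h.2)
  | abs u ih =>
    refine congrArg abs (ih (fun i hi => ?_) h)
    cases i with
    | zero => rfl
    | succ i => rw [liftSub, hσ i (Nat.lt_of_succ_lt_succ hi), rename]

theorem Closed.subst_eq_self (h : Closed t) : t.subst σ = t :=
  subst_eq_self_of_closedUnder (fun _ hi => absurd hi (Nat.not_lt_zero _)) h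

theorem not_closed_var (i : ℕ) : ¬ Closed (var i) :=
  Nat.not_lt_zero i

/-- `IsSubterm s t`: the term `s` occurs in `t`. The de Bruijn indices of `s` are not adjusted when
passing under a binder, so for open `s` this is an occurrence of the raw syntax tree. -/
inductive IsSubterm (s : Lam) : Lam → Prop
  | refl : IsSubterm s s
  | appL {u : Lam} (v : Lam) : IsSubterm s u → IsSubterm s (app u v)
  | appR (u : Lam) {v : Lam} : IsSubterm s v → IsSubterm s (app u v)
  | abs {u : Lam} : IsSubterm s u → IsSubterm s (abs u)

theorem IsSubterm.sizeOf_le (h : IsSubterm s t) : sizeOf s ≤ sizeOf t := by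
  induction h with
  | refl => rfl
  | appL v _ ih => rw [app.sizeOf_spec]; omega
  | appR u _ ih => rw [app.sizeOf_spec]; omega
  | abs _ ih => rw [abs.sizeOf_spec]; omega

theorem isSubterm_var_iff {i : ℕ} : IsSubterm s (var i) ↔ s = var i :=
  ⟨fun h => by cases h; rfl, fun h => h ▸ .refl⟩

theorem isSubterm_abs_iff : IsSubterm s (abs u) ↔ s = abs u ∨ IsSubterm s u := by
  refine ⟨fun h => ?_, Or.rec (fun h => h ▸ .refl) .abs⟩
  cases h with
  | refl => exact .inl rfl
  | abs h => exact .inr h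

theorem not_isSubterm_abs_self : ¬ IsSubterm (abs u) u := fun h => by
  have := h.sizeOf_le
  rw [abs.sizeOf_spec] at this
  omega

/-- The condition on `σ` is the invariant that carries the induction under a binder: it passes from
`k` and `σ` to `k + 1` and `liftSub σ`. -/
theorem closedUnder_or_exists_closed_isSubterm_of_closedUnder_subst
    (hσ : ∀ i ≥ k, ClosedUnder k (σ i) → Closed (σ i)) (h : ClosedUnder k (t.subst σ)) :
    ClosedUnder k t ∨ ∃ i, Closed (σ i) ∧ IsSubterm (σ i) (t.subst σ) := by
  induction t generalizing k σ with
  | var i =>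
    rcases lt_or_ge i k with hi | hi
    · exact .inl hi
    · exact .inr ⟨i, hσ i hi h, .refl⟩
  | app u v ihu ihv =>
    rcases ihu hσ h.1 with hu | ⟨i, hi, hsub⟩
    · rcases ihv hσ h.2 with hv | ⟨i, hi, hsub⟩
      · exact .inl ⟨hu, hv⟩
      · exact .inr ⟨i, hi, .appR _ hsub⟩
    · exact .inr ⟨i, hi, .appL _ hsub⟩
  | abs u ih =>
    have hlift : ∀ i ≥ k + 1, ClosedUnder (k + 1) (liftSub σ i) → Closed (liftSub σ i) := by
      rintro (_ | i) hi hclosed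
      · omega
      · have hσi : Closed (σ i) :=
          hσ i (by omega) (closedUnder_of_closedUnder_rename (fun _ => by omega) hclosed)
        rwa [liftSub, hσi.rename_eq_self]
    rcases ih hlift h with hu | ⟨_ | i, hi, hsub⟩
    · exact .inl hu
    · exact absurd hi (not_closed_var 0)
    · have hσi : Closed (σ i) := closed_of_closed_rename hi
      rw [liftSub, hσi.rename_eq_self] at hsub
      exact .inr ⟨i, hσi, .abs hsub⟩

/-- A closed term with no closed proper subterm: the terms that substitution can copy but not
create. -/
structure IsMinimalClosed (s : Lam) : Prop where
  closed : Closed s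
  eq_of_isSubterm : ∀ t, IsSubterm t s → Closed t → t = s

namespace IsMinimalClosed

theorem not_isSubterm_var (hs : IsMinimalClosed s) (i : ℕ) : ¬ IsSubterm s (var i) :=
  fun h => not_closed_var i (isSubterm_var_iff.1 h ▸ hs.closed)

theorem ne_app (hs : IsMinimalClosed s) (u v : Lam) : s ≠ app u v := by
  rintro rfl
  have huv : u = app u v := hs.eq_of_isSubterm u (.appL v .refl) hs.closed.1
  have := congrArg sizeOf huv
  rw [app.sizeOf_spec] at this
  omega

theorem isSubterm_app_iff (hs : IsMinimalClosed s) :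
    IsSubterm s (app u v) ↔ IsSubterm s u ∨ IsSubterm s v := by
  refine ⟨fun h => ?_, Or.rec (.appL v) (.appR u)⟩
  cases h with
  | refl => exact absurd rfl (hs.ne_app u v)
  | appL _ hu => exact .inl hu
  | appR _ hv => exact .inr hv

theorem isSubterm_of_isSubterm_rename (hs : IsMinimalClosed s) (h : IsSubterm s (t.rename ρ)) :
    IsSubterm s t := by
  induction t generalizing ρ with
  | var i => exact absurd h (hs.not_isSubterm_var _)
  | app u v ihu ihv => exact hs.isSubterm_app_iff.2 ((hs.isSubterm_app_iff.1 h).imp ihu ihv)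
  | abs u ih =>
    rcases isSubterm_abs_iff.1 h with heq | h
    · have heq : s = (abs u).rename ρ := heq
      have hu : Closed (abs u) := closed_of_closed_rename (heq ▸ hs.closed)
      rw [heq, hu.rename_eq_self]
      exact .refl
    · exact .abs (ih h)

theorem eq_or_exists_eq_of_eq_subst (hs : IsMinimalClosed s) (h : s = t.subst σ) :
    s = t ∨ ∃ i, s = σ i := by
  rcases closedUnder_or_exists_closed_isSubterm_of_closedUnder_subst (k := 0)
    (fun _ _ => id) (h ▸ hs.closed) with ht | ⟨i, hi, hsub⟩
  · exact .inl (h.trans (Closed.subst_eq_self ht))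
  · exact .inr ⟨i, (hs.eq_of_isSubterm _ (h ▸ hsub) hi).symm⟩

theorem isSubterm_or_exists_of_isSubterm_subst (hs : IsMinimalClosed s)
    (h : IsSubterm s (t.subst σ)) : IsSubterm s t ∨ ∃ i, IsSubterm s (σ i) := by
  induction t generalizing σ with
  | var i => exact .inr ⟨i, h⟩
  | app u v ihu ihv =>
    rcases hs.isSubterm_app_iff.1 h with h | h
    · exact (ihu h).imp_left (.appL v)
    · exact (ihv h).imp_left (.appR u)
  | abs u ih =>
    rcases isSubterm_abs_iff.1 h with heq | h
    · rcases hs.eq_or_exists_eq_of_eq_subst (t := abs u) heq with rfl | ⟨i, hi⟩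
      · exact .inl .refl
      · exact .inr ⟨i, hi ▸ .refl⟩
    · rcases ih h with hu | ⟨_ | i, hi⟩
      · exact .inl (.abs hu)
      · exact absurd hi (hs.not_isSubterm_var 0)
      · exact .inr ⟨i, hs.isSubterm_of_isSubterm_rename hi⟩

theorem isSubterm_or_of_isSubterm_subst0 (hs : IsMinimalClosed s)
    (h : IsSubterm s (u.subst0 v)) : IsSubterm s u ∨ IsSubterm s v := by
  rcases hs.isSubterm_or_exists_of_isSubterm_subst h with hu | ⟨_ | i, hi⟩
  · exact .inl hu
  · exact .inr hi
  · exact absurd hi (hs.not_isSubterm_var i)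

end IsMinimalClosed

theorem HeadStep.isAbs (h : HeadStep u v) (hu : u.IsAbs) : v.IsAbs := by
  cases h with
  | beta | appL => exact hu.elim
  | abs => trivial

theorem HeadRedN.isAbs (h : HeadRedN n u v) (hu : u.IsAbs) : v.IsAbs := by
  induction h with
  | refl => exact hu
  | step hstep _ ih => exact ih (hstep.isAbs hu)

namespace IsMinimalClosed

theorem isSubterm_of_headStep (hs : IsMinimalClosed s) (h : HeadStep u v) (hu : ¬ u.IsAbs)
    (hv : IsSubterm s v) : IsSubterm s u := by
  induction h with
  | beta u v =>
    exact hs.isSubterm_app_iff.2 ((hs.isSubterm_or_of_isSubterm_subst0 hv).imp_left .abs)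
  | appL v hhead _ ih =>
    exact hs.isSubterm_app_iff.2 ((hs.isSubterm_app_iff.1 hv).imp_left (ih hhead))
  | abs => exact absurd trivial hu

theorem isSubterm_of_headRed (hs : IsMinimalClosed s) (h : HeadRed u v) (hv : ¬ v.IsAbs)
    (hsub : IsSubterm s v) : IsSubterm s u := by
  obtain ⟨n, h⟩ := h
  induction h with
  | refl => exact hsub
  | step hstep hred ih =>
    exact hs.isSubterm_of_headStep hstep (fun hu => hv (hred.isAbs (hstep.isAbs hu))) (ih hv hsub)

theorem exists_betaEq_not_isSubterm (hs : IsMinimalClosed s) (hid : s ≠ abs (var 0)) :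
    ∃ θ, BetaEq θ s ∧ ¬ IsSubterm s θ := by
  cases s with
  | var i => exact absurd hs.closed (not_closed_var i)
  | app u v => exact absurd rfl (hs.ne_app u v)
  | abs u =>
    refine ⟨abs (app (abs (var 0)) u), .rel _ _ (.abs (.beta (var 0) u)), fun h => ?_⟩
    simp only [isSubterm_abs_iff, hs.isSubterm_app_iff, hs.not_isSubterm_var, hid,
      not_isSubterm_abs_self, abs.injEq, or_false] at h
    have := congrArg sizeOf h
    rw [app.sizeOf_spec] at this
    omega

theorem exists_betaEq_not_headRed (hs : IsMinimalClosed s) (hid : s ≠ abs (var 0))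
    {T : Lam} (hT : ¬ IsSubterm s T) :
    ∃ θ, BetaEq θ s ∧ ¬ HeadRed (app (app T θ) (var 0)) (app (var 0) s) := by
  obtain ⟨θ, hθ, hsub⟩ := hs.exists_betaEq_not_isSubterm hid
  refine ⟨θ, hθ, fun hred => ?_⟩
  have hsource : IsSubterm s (app (app T θ) (var 0)) :=
    hs.isSubterm_of_headRed hred id (.appR _ .refl)
  simp only [hs.isSubterm_app_iff, hs.not_isSubterm_var, or_false] at hsource
  exact hsource.elim hT hsub

end IsMinimalClosed

theorem closedUnder_iterApp {f x : Lam} (hf : ClosedUnder k f) (hx : ClosedUnder k x) (n : ℕ) :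
    ClosedUnder k (iterApp f n x) := by
  induction n with
  | zero => exact hx
  | succ n ih => exact ⟨hf, ih⟩

theorem closedUnder_of_closedUnder_iterApp {f x : Lam} (h : ClosedUnder k (iterApp f n x)) :
    ClosedUnder k x := by
  induction n with
  | zero => exact h
  | succ n ih => exact ih h.2

theorem isSubterm_or_exists_eq_of_isSubterm_iterApp {f x : Lam} (h : IsSubterm t (iterApp f n x)) :
    IsSubterm t f ∨ IsSubterm t x ∨ ∃ m, t = iterApp f m x := by
  induction n with
  | zero => exact .inr (.inl h)
  | succ n ih =>
    cases h with
    | refl => exact .inr (.inr ⟨n + 1, rfl⟩)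
    | appL _ hf => exact .inl hf
    | appR _ hx => exact ih hx

theorem le_sizeOf_iterApp (f x : Lam) (n : ℕ) : n ≤ sizeOf (iterApp f n x) := by
  induction n with
  | zero => exact Nat.zero_le _
  | succ n ih => rw [iterApp, app.sizeOf_spec]; omega

theorem lt_sizeOf_church (n : ℕ) : n < sizeOf (church n) := by
  have := le_sizeOf_iterApp (var 0) (var 1) n
  rw [church, abs.sizeOf_spec, abs.sizeOf_spec]
  omega

theorem isMinimalClosed_church (n : ℕ) : IsMinimalClosed (church n) where
  closed := closedUnder_iterApp (k := 2) (f := var 0) (x := var 1) Nat.two_pos Nat.one_lt_two n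
  eq_of_isSubterm t hsub ht := by
    rcases isSubterm_abs_iff.1 hsub with rfl | hsub
    · rfl
    rcases isSubterm_abs_iff.1 hsub with rfl | hsub
    · exact absurd (closedUnder_of_closedUnder_iterApp (k := 1) ht) (lt_irrefl 1)
    rcases isSubterm_or_exists_eq_of_isSubterm_iterApp hsub with hvar | hvar | ⟨m, rfl⟩
    · exact absurd (isSubterm_var_iff.1 hvar ▸ ht) (not_closed_var 0)
    · exact absurd (isSubterm_var_iff.1 hvar ▸ ht) (not_closed_var 1)
    · exact absurd (closedUnder_of_closedUnder_iterApp ht) (not_closed_var 1)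

end Lam

open Lam in
theorem stmt4_general (T : Lam) (n : ℕ) (hn : sizeOf T ≤ n) :
    ∃ θ, BetaEq θ (church n) ∧
      ¬ HeadRed (app (app T θ) (var 0)) (app (var 0) (church n)) := by
  have hT : ¬ IsSubterm (church n) T := fun h =>
    (lt_sizeOf_church n).not_ge (h.sizeOf_le.trans hn)
  exact (isMinimalClosed_church n).exists_betaEq_not_headRed (by simp [church]) hT

open Lam in
/-- Church integers do not have strong storage operators. -/
theorem stmt4 :
    ¬ ∃ T : Lam, Closed T ∧ ∀ (n : ℕ) (θ : Lam), BetaEq θ (church n) →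
        HeadRed (app (app T θ) (var 0)) (app (var 0) (church n)) := by
  rintro ⟨T, -, hT⟩
  obtain ⟨θ, hθ, hred⟩ := stmt4_general T (sizeOf T) le_rfl
  exact hred (hT (sizeOf T) θ hθ)
end
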